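/- For every τ in the genus-2 Siegel upper half space H₂, the point (P₀(τ), P₁(τ), P₂(τ), P₃(τ), P₄(τ)) lies on the Igusa quartic, i.e. I₄(P₀(τ), P₁(τ), P₂(τ), P₃(τ), P₄(τ)) = 0. -/

import Mathlib

/-!
Put `x₀, …, x₄` for `P₀, …, P₄`. The hyperplane `x₀ + x₁ + x₂ + x₃ = 0` meets the Igusa quartic in
a double quadric, so the quartic can be written as `q² - ℓ c` with `ℓ = x₀ + x₁ + x₂ + x₃`, `q`
quadratic and `c` cubic. If `e₁` and `e₃` denote the elementary symmetric functions of the four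
squares `Θ²[ε]`, then `ℓ = e₁²`, `q = 4 e₁ e₃` and `c = 16 e₃²`, so `q² - ℓ c` vanishes.
-/

open scoped BigOperators

namespace TwoLoop

/-- 2×2 complex matrices. -/
abbrev Mat2 := Matrix (Fin 2) (Fin 2) ℂ

/-- The genus-2 Siegel upper half space: symmetric 2×2 complex matrices with
positive definite imaginary part. -/
def SiegelH2 : Set Mat2 := {τ | τ.transpose = τ ∧ (τ.map Complex.im).PosDef}

/-- A (half-integer) theta characteristic `[a;b]`, recorded by its rows `a, b ∈ {0,1}²`. -/
abbrev Char := (Fin 2 → ℤ) × (Fin 2 → ℤ)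

/-- The theta constant `θ[a;b](τ) = Σ_{n ∈ ℤ²} exp(πi (n+a/2)ᵀ τ (n+a/2) + πi (n+a/2)·b)`. -/
noncomputable def theta (κ : Char) (τ : Mat2) : ℂ :=
  ∑' n : Fin 2 → ℤ,
    Complex.exp ((Real.pi : ℂ) * Complex.I *
      ((∑ i, ∑ j, ((n i : ℂ) + (κ.1 i : ℂ) / 2) * τ i j * ((n j : ℂ) + (κ.1 j : ℂ) / 2))
        + ∑ i, ((n i : ℂ) + (κ.1 i : ℂ) / 2) * (κ.2 i : ℂ)))

/-- The ten even characteristics δ₁,…,δ₁₀. -/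
def δev : Fin 10 → Char :=
  ![(![0,0], ![0,0]), (![0,0], ![0,1]), (![0,0], ![1,0]), (![0,0], ![1,1]),
    (![0,1], ![0,0]), (![0,1], ![1,0]), (![1,0], ![0,0]), (![1,0], ![0,1]),
    (![1,1], ![0,0]), (![1,1], ![1,1])]

/-- The six odd characteristics ν₁,…,ν₆. -/
def νodd : Fin 6 → Char :=
  ![(![0,1], ![0,1]), (![1,0], ![1,0]), (![0,1], ![1,1]),
    (![1,0], ![1,1]), (![1,1], ![0,1]), (![1,1], ![1,0])]

/-- `Θ[ε](τ) = θ[ε;0](2τ)`. -/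
noncomputable def Θf (ε : Fin 2 → ℤ) (τ : Mat2) : ℂ := theta (ε, ![0,0]) ((2 : ℂ) • τ)

noncomputable def P0 (τ : Mat2) : ℂ :=
  Θf ![0,0] τ ^ 4 + Θf ![0,1] τ ^ 4 + Θf ![1,0] τ ^ 4 + Θf ![1,1] τ ^ 4
noncomputable def P1 (τ : Mat2) : ℂ :=
  2 * (Θf ![0,0] τ ^ 2 * Θf ![0,1] τ ^ 2 + Θf ![1,0] τ ^ 2 * Θf ![1,1] τ ^ 2)
noncomputable def P2 (τ : Mat2) : ℂ :=
  2 * (Θf ![0,0] τ ^ 2 * Θf ![1,0] τ ^ 2 + Θf ![0,1] τ ^ 2 * Θf ![1,1] τ ^ 2)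
noncomputable def P3 (τ : Mat2) : ℂ :=
  2 * (Θf ![0,0] τ ^ 2 * Θf ![1,1] τ ^ 2 + Θf ![0,1] τ ^ 2 * Θf ![1,0] τ ^ 2)
noncomputable def P4 (τ : Mat2) : ℂ :=
  4 * (Θf ![0,0] τ * Θf ![0,1] τ * Θf ![1,0] τ * Θf ![1,1] τ)

/-- The vector `(P₀,…,P₄)`. -/
noncomputable def Pv : Fin 5 → Mat2 → ℂ := ![P0, P1, P2, P3, P4]

open MvPolynomial in
/-- The Igusa quartic as a polynomial in `x₀,…,x₄`. -/
noncomputable def I4poly : MvPolynomial (Fin 5) ℂ :=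
  X 4 ^ 4 + X 4 ^ 2 * X 0 ^ 2 - X 4 ^ 2 * X 1 ^ 2 - X 4 ^ 2 * X 2 ^ 2 - X 4 ^ 2 * X 3 ^ 2
    + X 1 ^ 2 * X 2 ^ 2 + X 1 ^ 2 * X 3 ^ 2 + X 2 ^ 2 * X 3 ^ 2
    - 2 * (X 0 * X 1 * X 2 * X 3)

/-- The signature `⟨κ|λ⟩ = exp(πi(a_κ·b_λ − b_κ·a_λ))`. -/
noncomputable def sig (κ lam : Char) : ℂ :=
  Complex.exp ((Real.pi : ℂ) * Complex.I *
    (((∑ i, κ.1 i * lam.2 i : ℤ) : ℂ) - ((∑ i, κ.2 i * lam.1 i : ℤ) : ℂ)))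

/-- Componentwise mod-2 sum of characteristics. -/
def addChar (κ lam : Char) : Char :=
  (fun i => (κ.1 i + lam.1 i) % 2, fun i => (κ.2 i + lam.2 i) % 2)

/-- For each even characteristic `δ_d`, the ordering `(k₁,…,k₆)` of `{1,…,6}` (0-indexed) whose
first three entries form the triad of odd characteristics with `δ_d = ν_{k₁}+ν_{k₂}+ν_{k₃}`
and whose last three are the complementary indices. -/
def triad : Fin 10 → Fin 6 → Fin 6 :=
  ![![0,3,5,1,2,4], ![0,1,5,2,3,4], ![0,1,4,2,3,5], ![0,3,4,1,2,5], ![0,1,3,2,4,5],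
    ![0,4,5,1,2,3], ![0,1,2,3,4,5], ![0,2,3,1,4,5], ![0,2,5,1,3,4], ![0,2,4,1,3,5]]

/-- D'Hoker–Phong's `Ξ₆[δ]`. -/
noncomputable def Xi6 (d : Fin 10) (τ : Mat2) : ℂ :=
  ∑ i : Fin 3, ∑ j : Fin 3,
    if i < j then
      sig (νodd (triad d (Fin.castLE (by norm_num) i))) (νodd (triad d (Fin.castLE (by norm_num) j))) *
        ∏ m : Fin 3,
          theta (addChar (addChar (νodd (triad d (Fin.castLE (by norm_num) i)))
              (νodd (triad d (Fin.castLE (by norm_num) j))))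
            (νodd (triad d (⟨m.1 + 3, by omega⟩ : Fin 6)))) τ ^ 4
    else 0

/-- The formal derivative `∂I₄/∂θ⁴[δ]` of the Igusa quartic with respect to the ten fourth
powers of the even theta constants, regarded as independent variables. -/
noncomputable def Dd (d : Fin 10) (τ : Mat2) : ℂ :=
  (1 / 48 : ℂ) *
    (theta (δev d) τ ^ 4 * (∑ d' : Fin 10, theta (δev d') τ ^ 8) - 4 * theta (δev d) τ ^ 12)

/-- `f_δ = 2Ξ₆[δ] − ∂I₄/∂θ⁴[δ]`. -/
noncomputable def fδ (d : Fin 10) (τ : Mat2) : ℂ := 2 * Xi6 d τ - Dd d τ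

/-- `Ψ₆`, the weight-6 modular form. -/
noncomputable def Ψ6 (τ : Mat2) : ℂ :=
  P0 τ ^ 3 - 9 * P0 τ * (P1 τ ^ 2 + P2 τ ^ 2 + P3 τ ^ 2 - 4 * P4 τ ^ 2)
    + 54 * (P1 τ * P2 τ * P3 τ)

/-- `Ψ₁₀`, the weight-10 modular form. -/
noncomputable def Ψ10 (τ : Mat2) : ℂ := ∏ d : Fin 10, theta (δev d) τ ^ 2

/-- A characteristic is even when `a·b` is even. -/
def IsEvenChar (κ : Char) : Prop := (∑ i, κ.1 i * κ.2 i) % 2 = 0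

/-- A characteristic is odd when `a·b` is odd. -/
def IsOddChar (κ : Char) : Prop := (∑ i, κ.1 i * κ.2 i) % 2 = 1

section Tropes

variable {R : Type*} [CommRing R]

/-- The parametrisation of the Igusa quartic by second-order theta constants, with `a, b, c, d` in
place of `Θ[00], Θ[01], Θ[10], Θ[11]`. -/
def igusaPoint (a b c d : R) : Fin 5 → R :=
  ![a ^ 4 + b ^ 4 + c ^ 4 + d ^ 4,
    2 * (a ^ 2 * b ^ 2 + c ^ 2 * d ^ 2),
    2 * (a ^ 2 * c ^ 2 + b ^ 2 * d ^ 2),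
    2 * (a ^ 2 * d ^ 2 + b ^ 2 * c ^ 2),
    4 * (a * b * c * d)]

/-- The linear form `ℓ` of a hyperplane tangent to the Igusa quartic along a quadric surface. -/
def tropeForm (x : Fin 5 → R) : R := x 0 + x 1 + x 2 + x 3

/-- The quadratic form `q` that cuts out, on the hyperplane `tropeForm = 0`, the quadric along which
this hyperplane is tangent to the Igusa quartic. -/
def tropeQuadric (x : Fin 5 → R) : R := x 1 * x 2 + x 1 * x 3 + x 2 * x 3 + x 4 ^ 2

/-- The cubic cofactor `c` of `tropeForm` in the presentation `q² - ℓ c` of the Igusa quartic. -/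
def tropeCubic (x : Fin 5 → R) : R := 2 * (x 1 * x 2 * x 3) - x 4 ^ 2 * (x 0 - x 1 - x 2 - x 3)

theorem aeval_I4poly [Algebra ℂ R] (x : Fin 5 → R) :
    MvPolynomial.aeval x I4poly = tropeQuadric x ^ 2 - tropeForm x * tropeCubic x := by
  simp only [I4poly, map_add, map_sub, map_mul, map_pow, map_ofNat, MvPolynomial.aeval_X,
    tropeForm, tropeQuadric, tropeCubic]
  ring

theorem tropeForm_igusaPoint (a b c d : R) :
    tropeForm (igusaPoint a b c d) = (a ^ 2 + b ^ 2 + c ^ 2 + d ^ 2) ^ 2 := by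
  simp only [tropeForm, igusaPoint, Matrix.cons_val]
  ring

theorem tropeQuadric_igusaPoint (a b c d : R) :
    tropeQuadric (igusaPoint a b c d) =
      4 * (a ^ 2 + b ^ 2 + c ^ 2 + d ^ 2) *
        ((b * c * d) ^ 2 + (a * c * d) ^ 2 + (a * b * d) ^ 2 + (a * b * c) ^ 2) := by
  simp only [tropeQuadric, igusaPoint, Matrix.cons_val]
  ring

theorem tropeCubic_igusaPoint (a b c d : R) :
    tropeCubic (igusaPoint a b c d) =
      16 * ((b * c * d) ^ 2 + (a * c * d) ^ 2 + (a * b * d) ^ 2 + (a * b * c) ^ 2) ^ 2 := by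
  simp only [tropeCubic, igusaPoint, Matrix.cons_val]
  ring

theorem statement2_general [Algebra ℂ R] (a b c d : R) :
    MvPolynomial.aeval (igusaPoint a b c d) I4poly = 0 := by
  rw [aeval_I4poly, tropeForm_igusaPoint, tropeQuadric_igusaPoint, tropeCubic_igusaPoint]
  ring

end Tropes

theorem Pv_eq_igusaPoint (τ : Mat2) :
    (fun i => Pv i τ) = igusaPoint (Θf ![0,0] τ) (Θf ![0,1] τ) (Θf ![1,0] τ) (Θf ![1,1] τ) := by
  funext i
  fin_cases i <;> rfl

/-- `(P₀(τ),…,P₄(τ))` lies on the Igusa quartic. -/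
theorem statement2 : ∀ τ ∈ SiegelH2,
    MvPolynomial.eval (fun i => Pv i τ) I4poly = 0 := by
  intro τ _
  rw [Pv_eq_igusaPoint, ← MvPolynomial.coe_aeval_eq_eval]
  exact statement2_general _ _ _ _

end TwoLoop
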